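/- arXiv:1108.4902 — 3 statements merged into one kernel-verified Lean document; each statement's English description precedes it below -/
import Mathlib

section
/- For any two nonempty finite subsets A, B of Z_2^n of sizes a and b, the cardinality of the Minkowski sum satisfies |A+B| ≥ a ∘ b, where a ∘ b = |IS(a)+IS(b)| is the Hopf–Stiefel function; i.e., initial segments minimize sumset size. -/
open Finset Pointwise

/-- Encoding of the lexicographic order on `(ZMod 2)^n`. -/
def lexNat {n : ℕ} (x : Fin n → ZMod 2) : ℕ := ∑ i, (x i).val * 2 ^ (i : ℕ)

/-- The `k` lexicographically smallest elements of `T`. -/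
def initSeg {n : ℕ} (T : Finset (Fin n → ZMod 2)) (k : ℕ) : Finset (Fin n → ZMod 2) :=
  T.filter fun x => (T.filter fun y => lexNat y < lexNat x).card < k

/-- The Hopf–Stiefel function `a ∘ b = |IS(a) + IS(b)|`, computed in `(ZMod 2)^(a+b)`,
a dimension large enough for the value to be the stable one. -/
def hs (a b : ℕ) : ℕ :=
  (initSeg (Finset.univ : Finset (Fin (a + b) → ZMod 2)) a + initSeg Finset.univ b).card

/-!
Let `i < |A|` and `j < |B|` with `(i + j).choose i` odd. Embed the ambient space in a polynomial
ring over `ZMod 2`. If `|A + B| ≤ i + j`, there is a monic polynomial `P` of degree `i + j`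
vanishing on `A + B`; the coefficient of `x ^ i * y ^ j` in `P (x + y)` is `(i + j).choose i ≠ 0`,
so the combinatorial Nullstellensatz gives a point of `A × B` where `P (x + y)` does not vanish, a
contradiction. Hence `i + j < |A + B|`.

Identify a vector with the natural number whose binary digits are its entries, so that `IS(k)`
becomes `{0, …, k - 1}` and addition becomes `^^^`. For `i < |A|` and `j < |B|`, deleting from both
`i` and `j` their common binary digits gives `i' ≤ i` and `j' ≤ j` with `i' + j' = i ^^^ j`, and no
carry occurs in this addition. By Kummer's theorem `(i' + j').choose i'` is odd, so
`i ^^^ j < |A + B|`. Thus the elements of `IS(|A|) + IS(|B|)` are distinct numbers below `|A + B|`.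
-/

section Bitwise

lemma xor_eq_add_of_and_eq_zero {i j : ℕ} (h : i &&& j = 0) : i ^^^ j = i + j := by
  induction i using Nat.strong_induction_on generalizing j with
  | _ i ih =>
    rcases Nat.eq_zero_or_pos i with rfl | hi
    · simp
    have h_tail : i / 2 ^^^ j / 2 = i / 2 + j / 2 :=
      ih (i / 2) (by omega) (by rw [← Nat.and_div_two, h])
    have h_bit : ¬(i % 2 = 1 ∧ j % 2 = 1) := by
      rw [← Nat.and_mod_two_eq_one, h]
      simp
    have h_div : (i ^^^ j) / 2 = i / 2 ^^^ j / 2 := Nat.xor_div_two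
    have h_mod : (i ^^^ j) % 2 = (i + j) % 2 := Nat.xor_mod_two_eq
    omega

lemma odd_choose_of_and_eq_zero {i j : ℕ} (h : i &&& j = 0) : Odd ((i + j).choose i) := by
  have no_carry (k : ℕ) : i % 2 ^ k + j % 2 ^ k < 2 ^ k := by
    have h_low : i % 2 ^ k &&& j % 2 ^ k = 0 := by rw [← Nat.and_mod_two_pow, h, Nat.zero_mod]
    rw [← xor_eq_add_of_and_eq_zero h_low]
    exact Nat.xor_lt_two_pow (Nat.mod_lt _ (by positivity)) (Nat.mod_lt _ (by positivity))
  rw [← Nat.not_even_iff_odd, even_iff_two_dvd, ← emultiplicity_eq_zero, add_comm,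
    Nat.Prime.emultiplicity_choose' Nat.prime_two (Nat.lt_succ_self _)]
  simp [no_carry]

lemma exists_add_eq_xor_and_odd_choose (i j : ℕ) :
    ∃ i' ≤ i, ∃ j' ≤ j, i' + j' = i ^^^ j ∧ Odd ((i' + j').choose i') := by
  have h_disjoint : (i &&& (i ^^^ j)) &&& (j &&& (i ^^^ j)) = 0 := by
    refine Nat.eq_of_testBit_eq fun k => ?_
    simp only [Nat.testBit_and, Nat.testBit_xor, Nat.zero_testBit]
    cases i.testBit k <;> cases j.testBit k <;> rfl
  refine ⟨i &&& (i ^^^ j), Nat.and_le_left, j &&& (i ^^^ j), Nat.and_le_left, ?_,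
    odd_choose_of_and_eq_zero h_disjoint⟩
  rw [← xor_eq_add_of_and_eq_zero h_disjoint, ← Nat.and_xor_distrib_right, Nat.and_self]

end Bitwise

section PolynomialMethod

open Polynomial

section CommSemiring

variable {R : Type*} [CommSemiring R]

lemma eval_aeval_X_add_X (P : R[X]) (s : Fin 2 → R) :
    MvPolynomial.eval s (aeval (MvPolynomial.X 0 + MvPolynomial.X 1) P) =
      P.eval (s 0 + s 1) := by
  rw [← MvPolynomial.coe_aeval_eq_eval, RingHom.coe_coe, ← aeval_algHom_apply]
  simp [coe_aeval_eq_eval]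

lemma coeff_aeval_X_add_X (P : R[X]) (t : Fin 2 →₀ ℕ) :
    (aeval (MvPolynomial.X 0 + MvPolynomial.X 1 : MvPolynomial (Fin 2) R) P).coeff t =
      P.coeff (t 0 + t 1) * ((t 0 + t 1).choose (t 0) : R) := by
  rw [aeval_eq_sum_range, MvPolynomial.coeff_sum]
  simp only [MvPolynomial.coeff_smul, MvPolynomial.coeff_add_pow, HasAntidiagonal.mem_antidiagonal,
    smul_eq_mul, Nat.cast_ite, Nat.cast_zero, mul_ite, mul_zero, Finset.sum_ite_eq, mem_range,
    Nat.lt_succ_iff]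
  split_ifs with h
  · rfl
  · rw [coeff_eq_zero_of_natDegree_lt (not_le.mp h), zero_mul]

lemma totalDegree_aeval_le {σ : Type*} (q : MvPolynomial σ R) (P : R[X]) :
    (aeval q P).totalDegree ≤ P.natDegree * q.totalDegree := by
  rw [aeval_eq_sum_range]
  refine MvPolynomial.totalDegree_finsetSum_le fun k hk => ?_
  calc (P.coeff k • q ^ k).totalDegree ≤ (q ^ k).totalDegree := MvPolynomial.totalDegree_smul_le _ _
    _ ≤ k * q.totalDegree := MvPolynomial.totalDegree_pow _ _
    _ ≤ P.natDegree * q.totalDegree := by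
      gcongr
      exact mem_range_succ_iff.mp hk

end CommSemiring

lemma exists_monic_natDegree_eq_and_eval_eq_zero {R : Type*} [CommRing R] [Nontrivial R]
    {S : Finset R} {d : ℕ} (hd : #S ≤ d) :
    ∃ P : R[X], P.Monic ∧ P.natDegree = d ∧ ∀ c ∈ S, P.eval c = 0 := by
  have h_prod : (∏ c ∈ S, (X - C c)).Monic :=
    monic_prod_of_monic _ _ fun c _ => monic_X_sub_C c
  refine ⟨(∏ c ∈ S, (X - C c)) * X ^ (d - #S), h_prod.mul (monic_X_pow _), ?_, ?_⟩
  · rw [h_prod.natDegree_mul (monic_X_pow _), natDegree_finsetProd_X_sub_C_eq_card,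
      natDegree_X_pow, Nat.add_sub_cancel' hd]
  · intro c hc
    rw [eval_mul, eval_prod, Finset.prod_eq_zero hc (by simp), zero_mul]

section IsDomain

variable {R : Type*} [CommRing R] [IsDomain R] {A B : Finset R} {i j : ℕ}

lemma exists_eval_add_ne_zero {P : R[X]} (hP : P.Monic) (h_deg : P.natDegree = i + j)
    (hi : i < #A) (hj : j < #B) (h_choose : ((i + j).choose i : R) ≠ 0) :
    ∃ a ∈ A, ∃ b ∈ B, P.eval (a + b) ≠ 0 := by
  let t : Fin 2 →₀ ℕ := Finsupp.single 0 i + Finsupp.single 1 j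
  have ht₀ : t 0 = i := by simp [t]
  have ht₁ : t 1 = j := by simp [t]
  let l : MvPolynomial (Fin 2) R := MvPolynomial.X 0 + MvPolynomial.X 1
  let f : MvPolynomial (Fin 2) R := aeval l P
  have h_coeff : f.coeff t ≠ 0 := by
    rwa [coeff_aeval_X_add_X, ht₀, ht₁, ← h_deg, hP.coeff_natDegree, one_mul, h_deg]
  have h_total : f.totalDegree = t.degree := by
    refine le_antisymm ?_ (MvPolynomial.le_totalDegree (MvPolynomial.mem_support_iff.mpr h_coeff))
    have h_linear : l.totalDegree ≤ 1 := (MvPolynomial.totalDegree_add _ _).trans (by simp)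
    calc f.totalDegree ≤ P.natDegree * l.totalDegree := totalDegree_aeval_le l P
      _ ≤ P.natDegree * 1 := by gcongr
      _ = t.degree := by simp [t, h_deg]
  obtain ⟨s, hs, h_eval⟩ := MvPolynomial.combinatorial_nullstellensatz_exists_eval_nonzero
    f t h_coeff h_total ![A, B] (by simp [Fin.forall_fin_two, ht₀, ht₁, hi, hj])
  exact ⟨s 0, hs 0, s 1, hs 1, by rwa [← eval_aeval_X_add_X]⟩

lemma add_lt_card_add_of_isDomain [DecidableEq R] (hi : i < #A) (hj : j < #B)
    (h_choose : ((i + j).choose i : R) ≠ 0) : i + j < #(A + B) := by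
  by_contra! h_card
  obtain ⟨P, hP, h_deg, h_zero⟩ := exists_monic_natDegree_eq_and_eval_eq_zero h_card
  obtain ⟨a, ha, b, hb, h_ne⟩ := exists_eval_add_ne_zero hP h_deg hi hj h_choose
  exact h_ne (h_zero _ (add_mem_add ha hb))

end IsDomain

lemma add_lt_card_add_of_free {R M : Type*} [CommRing R] [IsDomain R] [AddCommGroup M] [Module R M]
    [Module.Free R M] [DecidableEq M] {A B : Finset M} {i j : ℕ} (hi : i < #A) (hj : j < #B)
    (h_choose : ((i + j).choose i : R) ≠ 0) : i + j < #(A + B) := by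
  classical
  let φ := (Module.Free.chooseBasis R M).constr R (MvPolynomial.X (R := R))
  have hφ : Function.Injective φ :=
    Module.Basis.injective_constr_of_linearIndependent _ (MvPolynomial.linearIndependent_X _ R)
  rw [← card_image_of_injective _ hφ] at hi hj ⊢
  rw [image_add]
  refine add_lt_card_add_of_isDomain hi hj ?_
  rw [← map_natCast MvPolynomial.C]
  exact MvPolynomial.C_ne_zero.mpr h_choose

end PolynomialMethod

section LexNat

variable {n : ℕ}

-- `ZMod 2` unfolds to `Fin 2`, so `lexNat x` is `finFunctionFinEquiv x` by definition.
lemma lexNat_injective : Function.Injective (lexNat : (Fin n → ZMod 2) → ℕ) :=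
  Fin.val_injective.comp (finFunctionFinEquiv (m := 2)).injective

lemma lexNat_lt_two_pow (x : Fin n → ZMod 2) : lexNat x < 2 ^ n :=
  (finFunctionFinEquiv (m := 2) x).isLt

lemma exists_lexNat_eq {k : ℕ} (hk : k < 2 ^ n) : ∃ x : Fin n → ZMod 2, lexNat x = k := by
  obtain ⟨x, hx⟩ := (finFunctionFinEquiv (m := 2)).surjective ⟨k, hk⟩
  exact ⟨x, congrArg Fin.val hx⟩

lemma lexNat_div_two_pow_mod_two (x : Fin n → ZMod 2) (i : Fin n) :
    lexNat x / 2 ^ (i : ℕ) % 2 = (x i).val :=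
  congrArg Fin.val (congrFun ((finFunctionFinEquiv (m := 2)).symm_apply_apply x) i)

lemma lexNat_add (x y : Fin n → ZMod 2) : lexNat (x + y) = lexNat x ^^^ lexNat y := by
  obtain ⟨z, hz⟩ := exists_lexNat_eq
    (Nat.xor_lt_two_pow (lexNat_lt_two_pow x) (lexNat_lt_two_pow y))
  rw [← hz]
  congr 1
  funext i
  apply ZMod.val_injective
  rw [← lexNat_div_two_pow_mod_two z, hz, Nat.xor_div_two_pow, Nat.xor_mod_two_eq, Nat.add_mod,
    lexNat_div_two_pow_mod_two, lexNat_div_two_pow_mod_two, Pi.add_apply, ZMod.val_add]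

lemma card_filter_lexNat_lt {k : ℕ} (hk : k ≤ 2 ^ n) :
    #{y : Fin n → ZMod 2 | lexNat y < k} = k := by
  have h_image : image lexNat {y : Fin n → ZMod 2 | lexNat y < k} = range k := by
    ext m
    simp only [mem_image, mem_filter_univ, mem_range]
    constructor
    · rintro ⟨y, hy, rfl⟩
      exact hy
    · intro hm
      obtain ⟨y, rfl⟩ := exists_lexNat_eq (hm.trans_le hk)
      exact ⟨y, hm, rfl⟩
  rw [← card_image_of_injective _ lexNat_injective, h_image, card_range]

lemma mem_initSeg_univ {k : ℕ} {x : Fin n → ZMod 2} : x ∈ initSeg univ k ↔ lexNat x < k := by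
  simp [initSeg, card_filter_lexNat_lt (lexNat_lt_two_pow x).le]

lemma card_initSeg_add_initSeg_le {a b m : ℕ} (h : ∀ i < a, ∀ j < b, i ^^^ j < m) :
    #(initSeg (univ : Finset (Fin n → ZMod 2)) a + initSeg univ b) ≤ m := by
  rw [← card_range m]
  refine card_le_card_of_injOn lexNat (fun z hz => ?_) lexNat_injective.injOn
  obtain ⟨x, hx, y, hy, rfl⟩ := mem_add.mp hz
  rw [coe_range, Set.mem_Iio, lexNat_add]
  exact h _ (mem_initSeg_univ.mp hx) _ (mem_initSeg_univ.mp hy)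

end LexNat

theorem stmt3_general {V : Type*} [AddCommGroup V] [Module (ZMod 2) V] [DecidableEq V]
    (A B : Finset V) : hs #A #B ≤ #(A + B) := by
  refine card_initSeg_add_initSeg_le fun i hi j hj => ?_
  obtain ⟨i', hi', j', hj', h_xor, h_odd⟩ := exists_add_eq_xor_and_odd_choose i j
  rw [← h_xor]
  exact add_lt_card_add_of_free (hi'.trans_lt hi) (hj'.trans_lt hj)
    (ZMod.natCast_ne_zero_iff_odd.mpr h_odd)

theorem stmt3 {n : ℕ} (A B : Finset (Fin n → ZMod 2)) (hA : A.Nonempty) (hB : B.Nonempty) :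
    hs A.card B.card ≤ (A + B).card :=
  stmt3_general A B
end

section
/- Asymptotic upper bound for the Freiman–Ruzsa constant in Z_2^n: for every real t ≥ 2, if A ⊆ Z_2^n affinely generates Z_2^n and |A+A|/|A| ≤ (C(t,2)+t+1)/(t+1), then 2^n/|A| ≤ 2^t/(t+1). Equivalently, F((C(t,2)+t+1)/(t+1)) ≤ 2^t/(t+1), where F(K) is the supremum of |⟨A⟩|/|A| over affinely generating A with doubling constant at most K. -/
open Finset Pointwise

/-- The Freiman–Ruzsa constant for `(ZMod 2)^n`: the supremum of the spanning constant
`|⟨A⟩|/|A|` (affine span) over all subsets of all `(ZMod 2)^n` with doubling constant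
at most `K`. -/
noncomputable def FRconst (K : ℝ) : ℝ :=
  sSup {r : ℝ | ∃ (n : ℕ) (A : Finset (Fin n → ZMod 2)), A.Nonempty ∧
    ((A + A).card : ℝ) ≤ K * A.card ∧
    r = (Nat.card (affineSpan (ZMod 2) (A : Set (Fin n → ZMod 2))) : ℝ) / A.card}

/-!
Translate `A` so that it contains `0` and spans a finite `𝔽₂`-space `V`. Compressing `A` in a
direction `v` towards a hyperplane not containing `v` keeps `|A|` and does not enlarge `A + A`, so
`A` may be replaced by a set on which no useful compression is left. Such a set consists of the
kernel of a surjection `π : V → 𝔽₂ᵐ` together with nonempty, proper pieces of the fibres of `π`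
over the basis vectors, any two of which have total size at most `N = |ker π|`.

If the pieces have total size `a`, then `|A| = N + a`, and `2a ≤ mN` when `m ≥ 2`. In `A + A` the
fibres over `0` and the basis vectors are full, while the fibre over `eᵢ + eⱼ` is at least as large
as the average of the pieces over `eᵢ` and `eⱼ`; summing gives
`2|A + A| ≥ 2N(m + 1) + (m - 1)a`. Together with the doubling hypothesis this forces `m + 1 ≤ t`
(except when `m = 0`, or `m = 1` and `2a > N`, where the claim is immediate), and the bound on
`|V| / |A| = 2ᵐN / (N + a)` follows from `3·2ᵘ ≥ u² + 2u + 3` and `2ᵘ ≥ u + 1` at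
`u = t - m ≥ 1`.
-/

lemma sq_add_two_mul_add_three_le_three_mul_two_rpow {u : ℝ} (hu : 1 ≤ u) :
    u ^ 2 + 2 * u + 3 ≤ 3 * (2 : ℝ) ^ u := by
  have two_rpow_eq : (2 : ℝ) ^ u = 2 * Real.exp (Real.log 2 * (u - 1)) := by
    rw [← Real.rpow_def_of_pos two_pos, Real.rpow_sub_one two_ne_zero]
    ring
  have log_ge : 0.69 * (u - 1) ≤ Real.log 2 * (u - 1) := by
    gcongr
    linarith [Real.log_two_gt_d9]
  have exp_ge := Real.quadratic_le_exp_of_nonneg (x := 0.69 * (u - 1)) (by linarith)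
  have exp_mono := Real.exp_le_exp.mpr log_ge
  rw [two_rpow_eq]
  nlinarith

lemma four_mul_add_one_le_three_mul_two_rpow {t : ℝ} (ht : 2 ≤ t) :
    4 * (t + 1) ≤ 3 * (2 : ℝ) ^ t := by
  have h := sq_add_two_mul_add_three_le_three_mul_two_rpow (u := t - 1) (by linarith)
  rw [Real.rpow_sub_one two_ne_zero] at h
  nlinarith

lemma add_one_le_two_rpow {u : ℝ} (hu : 1 ≤ u) : u + 1 ≤ (2 : ℝ) ^ u := by
  have bernoulli := one_add_mul_self_le_rpow_one_add (s := 1) (by norm_num) hu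
  norm_num at bernoulli
  linarith

section Estimates

variable {t N a : ℝ} {m : ℕ}

lemma natCast_add_one_le_of_doubling (ht : 0 ≤ t) (hm : 1 ≤ m) (hN : 0 < N) (ha : 0 ≤ a)
    (hle : 2 * a ≤ m * N)
    (hd : (t + 1) * (2 * N * (m + 1) + (m - 1) * a) ≤ (t ^ 2 + t + 2) * (N + a)) :
    (m : ℝ) + 1 ≤ t := by
  have hm' : (1 : ℝ) ≤ m := by exact_mod_cast hm
  by_contra! hlt
  have factor_pos : 0 < (m + 1 - t) * ((m + 2) * (t + 1) - 2) * (N + a) := by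
    have : 0 < (m + 2) * (t + 1) - 2 := by nlinarith
    have : 0 < m + 1 - t := by linarith
    positivity
  have slack_nonneg : 0 ≤ (t + 1) * (m + 3) * (m * N - 2 * a) := by
    have : 0 ≤ m * N - 2 * a := by linarith
    positivity
  have scaled := mul_le_mul_of_nonneg_left hd (by positivity : (0 : ℝ) ≤ m + 2)
  linarith

lemma two_pow_mul_le_of_natCast_add_one_le (hNa : 0 ≤ N + a) (hmt : (m : ℝ) + 1 ≤ t)
    (hd : (t + 1) * (2 * N * (m + 1) + (m - 1) * a) ≤ (t ^ 2 + t + 2) * (N + a)) :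
    (2 : ℝ) ^ m * N * (t + 1) ≤ (2 : ℝ) ^ t * (N + a) := by
  have one_le : 1 ≤ t - m := by linarith
  have coeff_le : t ^ 2 + t + 2 - (m - 1) * (t + 1) ≤ (m + 3) * (2 : ℝ) ^ (t - m) := by
    linear_combination sq_add_two_mul_add_three_le_three_mul_two_rpow one_le
      + (m : ℝ) * add_one_le_two_rpow one_le
  have scaled : (m + 3) * (N * (t + 1)) ≤ (m + 3) * ((2 : ℝ) ^ (t - m) * (N + a)) := by
    linear_combination hd + (N + a) * coeff_le
  have two_rpow_eq : (2 : ℝ) ^ t = 2 ^ m * 2 ^ (t - m) := by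
    rw [← Real.rpow_natCast, ← Real.rpow_add two_pos, add_sub_cancel]
  rw [two_rpow_eq, mul_assoc, mul_assoc]
  exact mul_le_mul_of_nonneg_left (le_of_mul_le_mul_left scaled (by positivity)) (by positivity)

lemma two_pow_mul_le_two_rpow_mul (ht : 2 ≤ t) (hN : 0 < N) (ha : 0 ≤ a)
    (hle : 2 ≤ m → 2 * a ≤ m * N)
    (hd : 1 ≤ m → (t + 1) * (2 * N * (m + 1) + (m - 1) * a) ≤ (t ^ 2 + t + 2) * (N + a)) :
    (2 : ℝ) ^ m * N * (t + 1) ≤ (2 : ℝ) ^ t * (N + a) := by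
  have three_mul_le := four_mul_add_one_le_three_mul_two_rpow ht
  have two_rpow_pos : (0 : ℝ) < 2 ^ t := by positivity
  rcases Nat.eq_zero_or_pos m with rfl | hm
  · rw [pow_zero]
    nlinarith [two_rpow_pos]
  by_cases hsmall : 2 * a ≤ m * N
  · exact two_pow_mul_le_of_natCast_add_one_le (by positivity)
      (natCast_add_one_le_of_doubling (by linarith) hm hN ha hsmall (hd hm)) (hd hm)
  · obtain rfl : m = 1 := by
      by_contra hne
      exact hsmall (hle (by omega))
    rw [Nat.cast_one] at hsmall
    nlinarith [two_rpow_pos]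

end Estimates

lemma zmod_two_eq_zero_or_one (c : ZMod 2) : c = 0 ∨ c = 1 := by
  revert c
  decide

lemma eq_one_or_eq_one_of_add_eq_one_zmod_two {c d : ZMod 2} : c + d = 1 → c = 1 ∨ d = 1 := by
  revert c d
  decide

section Compression

variable {V : Type*} [AddCommGroup V] [Module (ZMod 2) V]

lemma add_add_cancel_right_zmod_two (x y : V) : x + y + y = x := by
  rw [add_assoc, ZModModule.add_self, add_zero]

lemma add_add_cancel_left_zmod_two (x y : V) : x + (x + y) = y := by
  rw [← add_assoc, ZModModule.add_self, zero_add]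

variable [DecidableEq V]

/-- The pointwise move underlying `compressAlong φ v A`: a point `y` with `φ y = 1` is translated
by `v` unless the translate already lies in `A`. It is meant for `φ v = 1`, so that the move
lands in the kernel of `φ`. -/
def pushAlong (φ : V →ₗ[ZMod 2] ZMod 2) (v : V) (A : Finset V) (y : V) : V :=
  if φ y = 1 ∧ y + v ∉ A then y + v else y

/-- The compression of `A` in direction `v` towards the hyperplane `φ = 0`. -/
def compressAlong (φ : V →ₗ[ZMod 2] ZMod 2) (v : V) (A : Finset V) : Finset V :=
  A.image (pushAlong φ v A)

variable {φ : V →ₗ[ZMod 2] ZMod 2} {v y : V} {A : Finset V}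

lemma pushAlong_injOn (φ : V →ₗ[ZMod 2] ZMod 2) (v : V) (A : Finset V) :
    Set.InjOn (pushAlong φ v A) A := by
  intro x hx y hy h
  simp only [pushAlong] at h
  split_ifs at h with hx' hy' hy'
  · exact add_right_cancel h
  · exact absurd (h ▸ hy) hx'.2
  · exact absurd (h ▸ hx) hy'.2
  · exact h

lemma card_compressAlong (φ : V →ₗ[ZMod 2] ZMod 2) (v : V) (A : Finset V) :
    #(compressAlong φ v A) = #A :=
  card_image_of_injOn (pushAlong_injOn φ v A)

lemma mem_compressAlong_of_apply_eq_zero (hv : φ v = 1) (hy : φ y = 0) :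
    y ∈ compressAlong φ v A ↔ y ∈ A ∨ y + v ∈ A := by
  simp only [compressAlong, mem_image, pushAlong]
  constructor
  · rintro ⟨x, hx, rfl⟩
    split_ifs
    · exact .inr (by rwa [add_add_cancel_right_zmod_two])
    · exact .inl hx
  · intro h
    by_cases hyA : y ∈ A
    · exact ⟨y, hyA, by simp [hy]⟩
    · exact ⟨y + v, h.resolve_left hyA, by simp [hy, hv, add_add_cancel_right_zmod_two, hyA]⟩

lemma mem_compressAlong_of_apply_eq_one (hv : φ v = 1) (hy : φ y = 1) :
    y ∈ compressAlong φ v A ↔ y ∈ A ∧ y + v ∈ A := by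
  simp only [compressAlong, mem_image, pushAlong]
  constructor
  · rintro ⟨x, hx, rfl⟩
    split_ifs at hy ⊢ with hpush
    · rw [map_add, hpush.1, hv] at hy
      exact absurd hy (by decide)
    · exact ⟨hx, not_not.mp fun hxv => hpush ⟨hy, hxv⟩⟩
  · exact fun ⟨hyA, hyv⟩ => ⟨y, hyA, by simp [hyv]⟩

lemma mem_or_add_mem_of_mem_compressAlong (hv : φ v = 1) (hy : y ∈ compressAlong φ v A) :
    y ∈ A ∨ y + v ∈ A := by
  rcases zmod_two_eq_zero_or_one (φ y) with h | h
  · exact (mem_compressAlong_of_apply_eq_zero hv h).mp hy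
  · exact .inl ((mem_compressAlong_of_apply_eq_one hv h).mp hy).1

lemma add_mem_and_add_add_mem {x : V} (hx : x ∈ A) (hxv : x + v ∈ A) (hy : y ∈ A ∨ y + v ∈ A) :
    x + y ∈ A + A ∧ x + y + v ∈ A + A := by
  rcases hy with hy | hyv
  · exact ⟨add_mem_add hx hy, add_right_comm x v y ▸ add_mem_add hxv hy⟩
  · refine ⟨?_, add_assoc x y v ▸ add_mem_add hx hyv⟩
    rw [← ZModModule.add_add_add_cancel x v y, add_comm v y]
    exact add_mem_add hxv hyv

lemma add_mem_or_add_add_mem {x : V} (hx : x ∈ A ∨ x + v ∈ A) (hy : y ∈ A ∨ y + v ∈ A) :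
    x + y ∈ A + A ∨ x + y + v ∈ A + A := by
  rcases hx with hx | hxv
  · rw [add_assoc]
    exact hy.imp (add_mem_add hx) (add_mem_add hx)
  · rcases hy with hy | hyv
    · exact .inr (add_right_comm x v y ▸ add_mem_add hxv hy)
    · left
      rw [← ZModModule.add_add_add_cancel x v y, add_comm v y]
      exact add_mem_add hxv hyv

lemma compressAlong_add_compressAlong_subset (hv : φ v = 1) (A : Finset V) :
    compressAlong φ v A + compressAlong φ v A ⊆ compressAlong φ v (A + A) := by
  refine add_subset_iff.mpr fun x hx y hy => ?_
  have hx' := mem_or_add_mem_of_mem_compressAlong hv hx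
  have hy' := mem_or_add_mem_of_mem_compressAlong hv hy
  rcases zmod_two_eq_zero_or_one (φ (x + y)) with hxy | hxy
  · exact (mem_compressAlong_of_apply_eq_zero hv hxy).mpr (add_mem_or_add_add_mem hx' hy')
  · rw [mem_compressAlong_of_apply_eq_one hv hxy]
    rcases eq_one_or_eq_one_of_add_eq_one_zmod_two ((map_add φ x y).symm.trans hxy) with h | h
    · obtain ⟨hxA, hxv⟩ := (mem_compressAlong_of_apply_eq_one hv h).mp hx
      exact add_mem_and_add_add_mem hxA hxv hy'
    · obtain ⟨hyA, hyv⟩ := (mem_compressAlong_of_apply_eq_one hv h).mp hy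
      rw [add_comm x]
      exact add_mem_and_add_add_mem hyA hyv hx'

lemma card_compressAlong_add_compressAlong_le (hv : φ v = 1) (A : Finset V) :
    #(compressAlong φ v A + compressAlong φ v A) ≤ #(A + A) :=
  (card_le_card (compressAlong_add_compressAlong_subset hv A)).trans (card_compressAlong φ v _).le

lemma sum_compressAlong_lt {f : V → ℕ} (hf : ∀ x, φ x = 1 → f (x + v) < f x)
    (hyA : y ∈ A) (hy : φ y = 1) (hyv : y + v ∉ A) :
    ∑ x ∈ compressAlong φ v A, f x < ∑ x ∈ A, f x := by
  rw [compressAlong, sum_image (pushAlong_injOn φ v A)]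
  refine sum_lt_sum (fun x _ => ?_) ⟨y, hyA, ?_⟩
  · unfold pushAlong
    split_ifs with hpush
    · exact (hf x hpush.1).le
    · exact le_rfl
  · rw [pushAlong, if_pos ⟨hy, hyv⟩]
    exact hf y hy

end Compression

section Weight

variable {m : ℕ}

/-- The potential of a vector `w : (ZMod 2)^m` that compressions decrease. Coordinate `i`
contributes `i + 1`, so that exchanging a basis vector for an earlier one also lowers the
potential. -/
def coordWeight (w : Fin m → ZMod 2) : ℕ :=
  ∑ i, (i.val + 1) * (w i).val

lemma coordWeight_single (i : Fin m) : coordWeight (Pi.single i 1) = i.val + 1 := by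
  rw [coordWeight, Fintype.sum_eq_single i (fun k hk => by simp [hk])]
  simp [ZMod.val_one]

lemma coordWeight_add_le (x y : Fin m → ZMod 2) :
    coordWeight (x + y) ≤ coordWeight x + coordWeight y := by
  rw [coordWeight, coordWeight, coordWeight, ← sum_add_distrib]
  refine sum_le_sum fun i _ => ?_
  rw [← mul_add]
  exact Nat.mul_le_mul_left _ (ZMod.val_add_le _ _)

lemma coordWeight_eq_of_apply_eq_one {x : Fin m → ZMod 2} {j : Fin m} (hx : x j = 1) :
    coordWeight x = coordWeight (x + Pi.single j 1) + (j.val + 1) := by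
  have off_j : ∑ i ∈ univ.erase j, (i.val + 1) * ((x + Pi.single j 1 : Fin m → ZMod 2) i).val =
      ∑ i ∈ univ.erase j, (i.val + 1) * (x i).val :=
    sum_congr rfl fun i hi => by simp [ne_of_mem_erase hi]
  rw [coordWeight, coordWeight, ← add_sum_erase _ _ (mem_univ j),
    ← add_sum_erase univ (fun i => (i.val + 1) * (_ : ZMod 2).val) (mem_univ j), off_j]
  simp [hx, ZModModule.add_self, ZMod.val_one, add_comm]

lemma coordWeight_add_lt {x y : Fin m → ZMod 2} {j : Fin m} (hx : x j = 1) (hy : y j = 1)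
    (hlt : coordWeight y < 2 * (j.val + 1)) : coordWeight (x + y) < coordWeight x := by
  have add_le := coordWeight_add_le (x + Pi.single j 1) (y + Pi.single j 1)
  rw [add_add_add_comm, ZModModule.add_self, add_zero] at add_le
  have hxj := coordWeight_eq_of_apply_eq_one hx
  have hyj := coordWeight_eq_of_apply_eq_one hy
  omega

end Weight

section Framed

variable {V : Type*} [AddCommGroup V] [Module (ZMod 2) V] {m : ℕ}

/-- `A` is framed by the linear map `π` if it contains the kernel of `π` and meets the fibre of
`π` over every standard basis vector. Since `π` is then onto, the fibres of `π` are the cosets of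
its kernel, indexed by `(ZMod 2)^m`. -/
structure IsFramed (π : V →ₗ[ZMod 2] (Fin m → ZMod 2)) (A : Finset V) : Prop where
  mem_of_apply_eq_zero : ∀ y, π y = 0 → y ∈ A
  exists_apply_eq_single : ∀ j, ∃ y ∈ A, π y = Pi.single j 1

variable {π : V →ₗ[ZMod 2] (Fin m → ZMod 2)} {A : Finset V}

lemma IsFramed.surjective (hA : IsFramed π A) : Function.Surjective π := by
  rw [← LinearMap.range_eq_top, eq_top_iff, ← (Pi.basisFun (ZMod 2) (Fin m)).span_eq,
    Submodule.span_le, Set.range_subset_iff]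
  intro j
  obtain ⟨y, -, hy⟩ := hA.exists_apply_eq_single j
  exact ⟨y, by rw [hy, Pi.basisFun_apply]⟩

lemma IsFramed.funLeft_succAbove {π : V →ₗ[ZMod 2] (Fin (m + 1) → ZMod 2)} (hA : IsFramed π A)
    {i : Fin (m + 1)} (hi : ∀ y, π y = Pi.single i 1 → y ∈ A) :
    IsFramed (LinearMap.funLeft (ZMod 2) (ZMod 2) i.succAbove ∘ₗ π) A where
  mem_of_apply_eq_zero y hy := by
    have hsucc : ∀ k, π y (i.succAbove k) = 0 := congrFun hy
    rcases zmod_two_eq_zero_or_one (π y i) with h | h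
    · exact hA.mem_of_apply_eq_zero y (funext (i.succAboveCases h hsucc))
    · exact hi y (funext (i.succAboveCases (by simp [h]) fun k => by simp [hsucc k]))
  exists_apply_eq_single j := by
    obtain ⟨y, hyA, hy⟩ := hA.exists_apply_eq_single (i.succAbove j)
    refine ⟨y, hyA, funext fun k => ?_⟩
    simp [hy, LinearMap.funLeft_apply, Pi.single_apply]

variable [DecidableEq V]

lemma IsFramed.compressAlong (hA : IsFramed π A) {v : V} {j : Fin m} (hv : π v j = 1)
    (hj : ∃ y ∈ A, π y = Pi.single j 1 ∧ y + v ∈ A) :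
    IsFramed π (compressAlong (LinearMap.proj j ∘ₗ π) v A) where
  mem_of_apply_eq_zero y hy :=
    (mem_compressAlong_of_apply_eq_zero hv (by simp [hy])).mpr
      (.inl (hA.mem_of_apply_eq_zero y hy))
  exists_apply_eq_single i := by
    rcases eq_or_ne i j with rfl | hij
    · obtain ⟨y, hyA, hy, hyv⟩ := hj
      exact ⟨y, (mem_compressAlong_of_apply_eq_one hv (by simp [hy])).mpr ⟨hyA, hyv⟩, hy⟩
    · obtain ⟨y, hyA, hy⟩ := hA.exists_apply_eq_single i
      exact ⟨y, (mem_compressAlong_of_apply_eq_zero hv (by simp [hy, hij.symm])).mpr (.inl hyA), hy⟩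

/-- A framed set on which no further progress is possible: no coordinate of `π` can be forgotten,
and no framed set with the same size and at most the same sumset has smaller total weight. -/
structure IsFullyCompressed (π : V →ₗ[ZMod 2] (Fin m → ZMod 2)) (A : Finset V) : Prop
    extends IsFramed π A where
  exists_notMem : ∀ i, ∃ y ∉ A, π y = Pi.single i 1
  sum_coordWeight_le : ∀ B, IsFramed π B → #B = #A → #(B + B) ≤ #(A + A) →
    ∑ y ∈ A, coordWeight (π y) ≤ ∑ y ∈ B, coordWeight (π y)

lemma IsFramed.exists_isFullyCompressed (hA : IsFramed π A) :
    ∃ (k : ℕ) (ρ : V →ₗ[ZMod 2] (Fin k → ZMod 2)) (B : Finset V),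
      IsFullyCompressed ρ B ∧ #B = #A ∧ #(B + B) ≤ #(A + A) := by
  let Admissible (k : ℕ) (ρ : V →ₗ[ZMod 2] (Fin k → ZMod 2)) (B : Finset V) : Prop :=
    IsFramed ρ B ∧ #B = #A ∧ #(B + B) ≤ #(A + A)
  obtain ⟨k, ⟨ρ, hρ⟩, k_min⟩ := exists_minimalFor_of_wellFoundedLT
    (fun k => ∃ ρ, ∃ B, Admissible k ρ B) id ⟨m, π, A, hA, rfl, le_rfl⟩
  obtain ⟨B, ⟨framed, card_eq, card_add_le⟩, B_min⟩ := exists_minimalFor_of_wellFoundedLT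
    (Admissible k ρ) (fun B => ∑ y ∈ B, coordWeight (ρ y)) hρ
  refine ⟨k, ρ, B, ⟨framed, fun i => ?_, fun C hC hcard hadd => ?_⟩, card_eq, card_add_le⟩
  · by_contra! hfull
    obtain _ | k := k
    · exact i.elim0
    have dropped := framed.funLeft_succAbove fun y hy => by_contra fun hyB => hfull y hyB hy
    exact absurd (k_min ⟨_, B, dropped, card_eq, card_add_le⟩ k.le_succ) k.not_succ_le_self
  · exact (le_total _ _).elim id (B_min ⟨hC, hcard.trans card_eq, hadd.trans card_add_le⟩)

end Framed

namespace IsFullyCompressed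

variable {V : Type*} [AddCommGroup V] [Module (ZMod 2) V] [DecidableEq V] {m : ℕ}
  {π : V →ₗ[ZMod 2] (Fin m → ZMod 2)} {A : Finset V}

lemma add_mem (hA : IsFullyCompressed π A) {v y : V} {j : Fin m} (hv : π v j = 1)
    (hlt : coordWeight (π v) < 2 * (j.val + 1))
    (hsurvivor : ∃ x ∈ A, π x = Pi.single j 1 ∧ x + v ∈ A) (hy : y ∈ A) (hyj : π y j = 1) :
    y + v ∈ A := by
  by_contra hyv
  have sum_lt : ∑ x ∈ compressAlong (LinearMap.proj j ∘ₗ π) v A, coordWeight (π x) <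
      ∑ x ∈ A, coordWeight (π x) :=
    sum_compressAlong_lt (fun x hx => map_add π x v ▸ coordWeight_add_lt hx hv hlt) hy hyj hyv
  exact sum_lt.not_ge <| hA.sum_coordWeight_le _ (hA.compressAlong hv hsurvivor)
    (card_compressAlong _ _ _) (card_compressAlong_add_compressAlong_le hv A)

lemma add_mem_of_apply_eq_single (hA : IsFullyCompressed π A) {v y : V} {j : Fin m}
    (hv : π v = Pi.single j 1) (hy : y ∈ A) (hyj : π y j = 1) : y + v ∈ A := by
  obtain ⟨x, hxA, hx⟩ := hA.exists_apply_eq_single j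
  refine hA.add_mem (by simp [hv]) (by rw [hv, coordWeight_single]; omega)
    ⟨x, hxA, hx, hA.mem_of_apply_eq_zero _ ?_⟩ hy hyj
  rw [map_add, hx, hv, ZModModule.add_self]

lemma apply_ne_single_add_single (hA : IsFullyCompressed π A) {y : V} (hy : y ∈ A) {i j : Fin m}
    (hij : i ≠ j) : π y ≠ Pi.single i 1 + Pi.single j 1 := by
  intro hπy
  obtain ⟨z, hzA, hz⟩ := hA.exists_notMem i
  have hyz : π (y + z) = Pi.single j 1 := by
    rw [map_add, hπy, hz, add_comm (Pi.single i 1), add_add_cancel_right_zmod_two]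
  refine hzA ?_
  rw [← add_add_cancel_left_zmod_two y z]
  exact hA.add_mem_of_apply_eq_single hyz hy (by simp [hπy, hij.symm])

lemma apply_eq_zero_or_exists_apply_eq_single (hA : IsFullyCompressed π A) {y : V} (hy : y ∈ A) :
    π y = 0 ∨ ∃ j, π y = Pi.single j 1 := by
  induction hwt : coordWeight (π y) using Nat.strong_induction_on generalizing y with
  | _ w ih =>
  by_contra! hne
  obtain ⟨j, hj⟩ := Function.ne_iff.mp hne.1
  replace hj : π y j = 1 := (zmod_two_eq_zero_or_one _).resolve_left hj
  obtain ⟨r, -, hr⟩ := hA.exists_apply_eq_single j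
  have sum_lt : coordWeight (π (y + r)) < w := by
    rw [← hwt, map_add, hr]
    exact coordWeight_add_lt hj (by simp) (by rw [coordWeight_single]; omega)
  have hπy : π y = π (y + r) + Pi.single j 1 := by
    rw [map_add, hr, add_add_cancel_right_zmod_two]
  rcases ih _ sum_lt (hA.add_mem_of_apply_eq_single hr hy hj) rfl with h | ⟨i, h⟩
  · exact hne.2 j (by rw [hπy, h, zero_add])
  · rw [h] at hπy
    rcases eq_or_ne i j with rfl | hij
    · exact hne.1 (by rw [hπy, ZModModule.add_self])
    · exact hA.apply_ne_single_add_single hy hij hπy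

end IsFullyCompressed

lemma sum_sum_Ioi_add_eq_card_sub_one_mul_sum {m : ℕ} (f : Fin m → ℕ) :
    ∑ i, ∑ j ∈ Ioi i, (f i + f j) = (m - 1) * ∑ i, f i := by
  rw [sum_sum_Ioi_add_eq_sum_sum_off_diag (fun _ i => f i), mul_sum]
  refine sum_congr rfl fun i _ => ?_
  rw [sum_const, card_compl, card_singleton, Fintype.card_fin, smul_eq_mul]

lemma two_mul_sum_le_of_pairwise_add_le {m N : ℕ} (hm : 2 ≤ m) {f : Fin m → ℕ}
    (hf : ∀ i j, i < j → f i + f j ≤ N) : 2 * ∑ i, f i ≤ m * N := by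
  have sum_le : ∑ i : Fin m, ∑ j ∈ Ioi i, (f i + f j) ≤ ∑ i : Fin m, ∑ _ ∈ Ioi i, N :=
    sum_le_sum fun i _ => sum_le_sum fun j hj => hf i j (mem_Ioi.mp hj)
  have two_mul_const := sum_sum_Ioi_add_eq_card_sub_one_mul_sum fun _ : Fin m => N
  simp only [← two_mul, ← mul_sum, sum_const, card_univ, Fintype.card_fin, smul_eq_mul]
    at two_mul_const
  rw [sum_sum_Ioi_add_eq_card_sub_one_mul_sum] at sum_le
  refine Nat.le_of_mul_le_mul_left (c := m - 1) ?_ (by omega)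
  simp only [sum_const, smul_eq_mul] at sum_le
  linarith

section Pairs

variable {m : ℕ}

lemma single_one_injective :
    Function.Injective fun i : Fin m => (Pi.single i 1 : Fin m → ZMod 2) :=
  fun i j h => by simpa [Pi.single_apply] using congrFun h i

lemma single_add_single_injOn :
    Set.InjOn
      (fun p : Σ _ : Fin m, Fin m => (Pi.single p.1 1 + Pi.single p.2 1 : Fin m → ZMod 2))
      (univ.sigma Ioi : Finset (Σ _ : Fin m, Fin m)) := by
  rintro ⟨i, j⟩ hij ⟨k, l⟩ hkl h
  have hi := congrFun h i
  have hj := congrFun h j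
  have hk := congrFun h k
  simp only [Pi.add_apply, Pi.single_apply, coe_sigma, Set.mem_sigma_iff, mem_coe, mem_Ioi] at *
  grind

lemma single_add_single_ne_zero {i j : Fin m} (hij : i ≠ j) :
    (Pi.single i 1 + Pi.single j 1 : Fin m → ZMod 2) ≠ 0 :=
  fun h => by simpa [hij] using congrFun h i

lemma single_add_single_ne_single {i j : Fin m} (hij : i ≠ j) (k : Fin m) :
    (Pi.single i 1 + Pi.single j 1 : Fin m → ZMod 2) ≠ Pi.single k 1 := by
  intro h
  have hi := congrFun h i
  have hj := congrFun h j
  simp only [Pi.add_apply, Pi.single_apply] at hi hj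
  grind

lemma sum_insert_zero_image_single (g : (Fin m → ZMod 2) → ℕ) :
    ∑ w ∈ insert 0 (univ.image fun i : Fin m => Pi.single i 1), g w =
      g 0 + ∑ i, g (Pi.single i 1) := by
  rw [sum_insert (by simp), sum_image single_one_injective.injOn]

lemma add_sum_single_add_sum_pair_le_sum (g : (Fin m → ZMod 2) → ℕ) :
    g 0 + ∑ i, g (Pi.single i 1) + ∑ i, ∑ j ∈ Ioi i, g (Pi.single i 1 + Pi.single j 1) ≤
      ∑ w, g w := by
  rw [sum_sigma',
    ← sum_image (g := fun p : Σ _ : Fin m, Fin m => Pi.single p.1 1 + Pi.single p.2 1)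
      single_add_single_injOn, ← sum_insert_zero_image_single, ← sum_union]
  · exact sum_le_sum_of_subset (subset_univ _)
  · simp only [disjoint_right, mem_image, mem_sigma, mem_univ, true_and, mem_Ioi, mem_insert]
    rintro _ ⟨⟨i, j⟩, hij, rfl⟩ (h | ⟨k, h⟩)
    · exact single_add_single_ne_zero hij.ne h
    · exact single_add_single_ne_single hij.ne k h.symm

end Pairs

section FibreCounts

variable {V : Type*} [AddCommGroup V] [Module (ZMod 2) V] {m : ℕ}
  {π : V →ₗ[ZMod 2] (Fin m → ZMod 2)} {A : Finset V}

lemma card_fibre_le_card_fibre_add [DecidableEq V] {w u : Fin m → ZMod 2} {r : V}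
    (hr : r ∈ A) (hru : π r = u) :
    #{y ∈ A | π y = w} ≤ #{z ∈ A + A | π z = w + u} := by
  refine card_le_card_of_injOn (· + r) (fun y hy => ?_) (add_left_injective r).injOn
  simp only [mem_coe, mem_filter] at hy ⊢
  exact ⟨add_mem_add hy.1 hr, by rw [map_add, hy.2, hru]⟩

lemma IsFramed.card_fibre_add_card_fibre_le_two_mul [DecidableEq V] (hA : IsFramed π A)
    (i j : Fin m) :
    #{y ∈ A | π y = Pi.single i 1} + #{y ∈ A | π y = Pi.single j 1} ≤
      2 * #{z ∈ A + A | π z = Pi.single i 1 + Pi.single j 1} := by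
  obtain ⟨r, hrA, hr⟩ := hA.exists_apply_eq_single i
  obtain ⟨s, hsA, hs⟩ := hA.exists_apply_eq_single j
  have hi := card_fibre_le_card_fibre_add (w := Pi.single i 1) hsA hs
  have hj := card_fibre_le_card_fibre_add (w := Pi.single j 1) hrA hr
  rw [add_comm (Pi.single j 1)] at hj
  omega

variable [Fintype V]

lemma card_fibre_eq_card_ker (hπ : Function.Surjective π) (w : Fin m → ZMod 2) :
    #{y | π y = w} = #{y | π y = 0} :=
  AddMonoidHom.card_fiber_eq_of_mem_range π (hπ w) ⟨0, map_zero π⟩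

lemma card_eq_two_pow_mul_card_ker (hπ : Function.Surjective π) :
    Fintype.card V = 2 ^ m * #{y | π y = 0} := by
  rw [← card_univ, card_eq_sum_card_fiberwise (f := π) (t := univ) (fun _ _ => mem_univ _),
    sum_congr rfl fun w _ => card_fibre_eq_card_ker hπ w]
  simp

lemma IsFramed.card_filter_zero (hA : IsFramed π A) : #{y ∈ A | π y = 0} = #{y | π y = 0} := by
  congr 1
  ext y
  simpa using hA.mem_of_apply_eq_zero y

lemma exists_add_mem_of_card_ker_lt (hπ : Function.Surjective π) {w u : Fin m → ZMod 2} {v : V}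
    (hv : π v = w + u) (hlt : #{y | π y = 0} < #{y ∈ A | π y = w} + #{y ∈ A | π y = u}) :
    ∃ x ∈ A, π x = u ∧ x + v ∈ A := by
  classical
  have fibre_subset : {y ∈ A | π y = w} ⊆ ({y | π y = w} : Finset V) :=
    filter_subset_filter _ (subset_univ A)
  have translate_subset : {y ∈ A | π y = u}.image (· + v) ⊆ ({y | π y = w} : Finset V) := by
    refine image_subset_iff.mpr fun y hy => mem_filter.mpr ⟨mem_univ _, ?_⟩
    rw [map_add, (mem_filter.mp hy).2, hv, add_comm w, add_add_cancel_left_zmod_two]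
  obtain ⟨z, hz⟩ := inter_nonempty_of_card_lt_card_add_card fibre_subset translate_subset
    (by rwa [card_fibre_eq_card_ker hπ, card_image_of_injective _ (add_left_injective v)])
  obtain ⟨hzw, hzu⟩ := mem_inter.mp hz
  obtain ⟨x, hx, rfl⟩ := mem_image.mp hzu
  exact ⟨x, (mem_filter.mp hx).1, (mem_filter.mp hx).2, (mem_filter.mp hzw).1⟩

variable [DecidableEq V]

lemma IsFullyCompressed.card_eq (hA : IsFullyCompressed π A) :
    #A = #{y | π y = 0} + ∑ j, #{y ∈ A | π y = Pi.single j 1} := by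
  rw [← hA.card_filter_zero, ← sum_insert_zero_image_single fun w => #{y ∈ A | π y = w}]
  refine card_eq_sum_card_fiberwise fun y hy => ?_
  simpa [eq_comm] using hA.apply_eq_zero_or_exists_apply_eq_single hy

lemma IsFullyCompressed.card_fibre_add_card_fibre_le (hA : IsFullyCompressed π A) {i j : Fin m}
    (hij : i < j) :
    #{y ∈ A | π y = Pi.single i 1} + #{y ∈ A | π y = Pi.single j 1} ≤ #{y | π y = 0} := by
  by_contra! hlt
  obtain ⟨z, hzA, hz⟩ := hA.exists_notMem i
  obtain ⟨y, hyA, hy⟩ := hA.exists_apply_eq_single j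
  have hπv : π (y + z) = Pi.single i 1 + Pi.single j 1 := by rw [map_add, hy, hz, add_comm]
  have survivor := exists_add_mem_of_card_ker_lt hA.surjective hπv hlt
  refine hzA ?_
  rw [← add_add_cancel_left_zmod_two y z]
  refine hA.add_mem (by simp [hπv, hij.ne']) ?_ survivor hyA (by simp [hy])
  have weight_le := coordWeight_add_le (Pi.single i 1) (Pi.single j 1)
  rw [coordWeight_single, coordWeight_single] at weight_le
  rw [hπv]
  omega

lemma IsFramed.card_ker_le_card_fibre_single_add (hA : IsFramed π A) (j : Fin m) :
    #{y | π y = 0} ≤ #{z ∈ A + A | π z = Pi.single j 1} := by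
  obtain ⟨r, hrA, hr⟩ := hA.exists_apply_eq_single j
  rw [← hA.card_filter_zero, ← zero_add (Pi.single j 1)]
  exact card_fibre_le_card_fibre_add hrA hr

lemma IsFramed.card_ker_le_card_fibre_zero_add (hA : IsFramed π A) :
    #{y | π y = 0} ≤ #{z ∈ A + A | π z = 0} := by
  rw [← hA.card_filter_zero]
  simpa using card_fibre_le_card_fibre_add (w := 0)
    (hA.mem_of_apply_eq_zero 0 (map_zero π)) (map_zero π)

lemma IsFramed.le_two_mul_card_add (hA : IsFramed π A) :
    2 * (#{y | π y = 0} * (m + 1)) + (m - 1) * ∑ j, #{y ∈ A | π y = Pi.single j 1} ≤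
      2 * #(A + A) := by
  have card_add_eq : #(A + A) = ∑ w, #{z ∈ A + A | π z = w} :=
    card_eq_sum_card_fiberwise fun _ _ => mem_univ _
  have weight_le_two := add_sum_single_add_sum_pair_le_sum fun w => #{z ∈ A + A | π z = w}
  have weight_one : m * #{y | π y = 0} ≤ ∑ j, #{z ∈ A + A | π z = Pi.single j 1} := by
    simpa using card_nsmul_le_sum univ _ _ fun j _ => hA.card_ker_le_card_fibre_single_add j
  have weight_two : (m - 1) * ∑ j, #{y ∈ A | π y = Pi.single j 1} ≤
      2 * ∑ i, ∑ j ∈ Ioi i, #{z ∈ A + A | π z = Pi.single i 1 + Pi.single j 1} := by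
    rw [← sum_sum_Ioi_add_eq_card_sub_one_mul_sum, mul_sum]
    simp only [mul_sum]
    exact sum_le_sum fun i _ => sum_le_sum fun j _ => hA.card_fibre_add_card_fibre_le_two_mul i j
  linarith [hA.card_ker_le_card_fibre_zero_add]

end FibreCounts

section Bound

variable {V : Type*} [AddCommGroup V] [Module (ZMod 2) V] {A : Finset V} {t : ℝ}

lemma exists_isFramed_of_span_eq_top (h0 : 0 ∈ A)
    (hspan : Submodule.span (ZMod 2) (A : Set V) = ⊤) :
    ∃ (m : ℕ) (π : V →ₗ[ZMod 2] (Fin m → ZMod 2)), IsFramed π A := by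
  obtain ⟨f, hfA, hf_span, hf_indep⟩ :=
    Submodule.exists_fun_fin_finrank_span_eq (ZMod 2) (A : Set V)
  let b := Module.Basis.mk hf_indep (hf_span.trans hspan).ge
  refine ⟨_, b.equivFun.toLinearMap, fun y hy => ?_, fun j => ⟨f j, hfA j, ?_⟩⟩
  · rwa [b.equivFun.map_eq_zero_iff.mp hy]
  · have b_apply : b j = f j := Module.Basis.mk_apply _ _ j
    ext i
    rw [LinearEquiv.coe_coe, ← b_apply, b.equivFun_self, Pi.single_apply]
    exact if_congr eq_comm rfl rfl

variable [DecidableEq V]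

lemma IsFullyCompressed.card_mul_le [Fintype V] {m : ℕ} {π : V →ₗ[ZMod 2] (Fin m → ZMod 2)}
    (hA : IsFullyCompressed π A) (ht : 2 ≤ t)
    (hdoubling : 2 * (t + 1) * #(A + A) ≤ (t ^ 2 + t + 2) * #A) :
    Fintype.card V * (t + 1) ≤ (2 : ℝ) ^ t * #A := by
  have kernel_pos : 0 < #{y | π y = 0} := card_pos.mpr ⟨0, by simp⟩
  have sum_le (hm : 2 ≤ m) :=
    two_mul_sum_le_of_pairwise_add_le hm fun i j => hA.card_fibre_add_card_fibre_le
  have le_card_add := hA.le_two_mul_card_add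
  rw [card_eq_two_pow_mul_card_ker hA.surjective]
  rw [hA.card_eq] at hdoubling ⊢
  generalize ∑ j, #{y ∈ A | π y = Pi.single j 1} = a at *
  generalize #{y | π y = 0} = N at *
  push_cast at hdoubling ⊢
  refine two_pow_mul_le_two_rpow_mul ht (by exact_mod_cast kernel_pos) a.cast_nonneg
    (fun hm => by exact_mod_cast sum_le hm) fun hm => ?_
  have le_card_add' : 2 * (N * (m + 1)) + (m - 1) * a ≤ (2 * #(A + A) : ℝ) := by
    rw [← Nat.cast_pred hm]
    exact_mod_cast le_card_add
  nlinarith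

lemma card_mul_le_of_span_eq_top [Fintype V] (ht : 2 ≤ t) (h0 : 0 ∈ A)
    (hspan : Submodule.span (ZMod 2) (A : Set V) = ⊤)
    (hdoubling : 2 * (t + 1) * #(A + A) ≤ (t ^ 2 + t + 2) * #A) :
    Fintype.card V * (t + 1) ≤ (2 : ℝ) ^ t * #A := by
  obtain ⟨m, π, hA⟩ := exists_isFramed_of_span_eq_top h0 hspan
  obtain ⟨k, ρ, B, hB, card_eq, card_add_le⟩ := hA.exists_isFullyCompressed
  rw [← card_eq] at hdoubling ⊢
  refine hB.card_mul_le ht (le_trans ?_ hdoubling)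
  gcongr

end Bound

section AffineSpan

variable {k V : Type*} [DivisionRing k] [AddCommGroup V] [Module k V]

lemma natCard_affineSpan_eq_natCard_span_sub (A : Set V) {a : V} (ha : a ∈ A) :
    Nat.card (affineSpan k A) = Nat.card (Submodule.span k ((· - a) '' A)) := by
  have ha' := mem_affineSpan k ha
  have : Nonempty (affineSpan k A) := ⟨⟨a, ha'⟩⟩
  rw [Nat.card_congr (Equiv.vaddConst (⟨a, ha'⟩ : affineSpan k A)).symm, direction_affineSpan,
    vectorSpan_eq_span_vsub_set_right k ha]
  rfl

lemma exists_finset_span_sub [DecidableEq V] {A : Finset V} {a : V} (ha : a ∈ A) :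
    ∃ B : Finset (Submodule.span k ((· - a) '' (A : Set V))), 0 ∈ B ∧
      Submodule.span k (B : Set (Submodule.span k ((· - a) '' (A : Set V)))) = ⊤ ∧
      #B = #A ∧ #(B + B) = #(A + A) := by
  set W := Submodule.span k ((· - a) '' (A : Set V))
  let A' : Finset V := A + {-a}
  have coe_A' : (A' : Set V) = (· - a) '' (A : Set V) := by
    simp [A', sub_eq_add_neg]
  let B : Finset W := A'.preimage (↑) Subtype.val_injective.injOn
  have image_B : B.image W.subtype = A' := by
    ext y
    have mem_W (hy : y ∈ A') : y ∈ W := Submodule.subset_span (coe_A' ▸ mem_coe.mpr hy)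
    simpa [B] using mem_W
  have card_image (C : Finset W) : #(C.image W.subtype) = #C :=
    card_image_of_injective C W.injective_subtype
  refine ⟨B, ?_, ?_, ?_, ?_⟩
  · refine mem_preimage.mpr (mem_add.mpr ⟨a, ha, -a, mem_singleton_self _, ?_⟩)
    exact add_neg_cancel a
  · rw [coe_preimage, coe_A']
    exact Submodule.span_span_coe_preimage
  · rw [← card_image, image_B, card_add_singleton]
  · rw [← card_image, image_add, image_B, add_add_add_comm, singleton_add_singleton,
      card_add_singleton]

end AffineSpan

theorem stmt10_general (t : ℝ) (ht : 2 ≤ t) {V : Type*} [AddCommGroup V] [Module (ZMod 2) V]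
    [DecidableEq V] (A : Finset V) (hA : A.Nonempty)
    (hdoubling : (#(A + A) : ℝ) ≤ (t * (t - 1) / 2 + t + 1) / (t + 1) * #A) :
    (Nat.card (affineSpan (ZMod 2) (A : Set V)) : ℝ) / #A ≤ (2 : ℝ) ^ t / (t + 1) := by
  obtain ⟨a, ha⟩ := hA
  have t_pos : 0 < t + 1 := by linarith
  have A_pos : (0 : ℝ) < #A := by exact_mod_cast card_pos.mpr ⟨a, ha⟩
  have cleared : 2 * (t + 1) * #(A + A) ≤ (t ^ 2 + t + 2) * #A := by
    rw [div_mul_eq_mul_div, le_div_iff₀ t_pos] at hdoubling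
    linarith
  obtain ⟨B, zero_mem, span_eq, card_eq, card_add_eq⟩ := exists_finset_span_sub (k := ZMod 2) ha
  have : Finite (Submodule.span (ZMod 2) ((· - a) '' (A : Set V))) := by
    have := FiniteDimensional.span_of_finite (ZMod 2) (A.finite_toSet.image (· - a))
    exact Module.finite_of_finite (ZMod 2)
  have := Fintype.ofFinite (Submodule.span (ZMod 2) ((· - a) '' (A : Set V)))
  rw [div_le_div_iff₀ A_pos t_pos, natCard_affineSpan_eq_natCard_span_sub _ (mem_coe.mpr ha),
    Nat.card_eq_fintype_card, ← card_eq]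
  exact card_mul_le_of_span_eq_top ht zero_mem span_eq (by rwa [card_eq, card_add_eq])

theorem stmt10 (t : ℝ) (ht : 2 ≤ t) :
    (∀ (n : ℕ) (A : Finset (Fin n → ZMod 2)),
      affineSpan (ZMod 2) (A : Set (Fin n → ZMod 2)) = ⊤ →
      ((A + A).card : ℝ) / A.card ≤ (t * (t - 1) / 2 + t + 1) / (t + 1) →
      (2 ^ n : ℝ) / A.card ≤ (2 : ℝ) ^ t / (t + 1)) ∧
    FRconst ((t * (t - 1) / 2 + t + 1) / (t + 1)) ≤ (2 : ℝ) ^ t / (t + 1) := by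
  have t_pos : 0 < t + 1 := by linarith
  refine ⟨fun n A hspan hK => ?_, Real.sSup_le ?_ (div_nonneg (by positivity) t_pos.le)⟩
  · have hA : A.Nonempty :=
      coe_nonempty.mp <| (affineSpan_nonempty (ZMod 2)).mp (by simp [hspan])
    have hA_pos : (0 : ℝ) < #A := by exact_mod_cast hA.card_pos
    simpa [hspan] using stmt10_general t ht A hA ((div_le_iff₀ hA_pos).mp hK)
  · rintro _ ⟨n, A, hA, hK, rfl⟩
    exact stmt10_general t ht A hA hK
end

section
/- Superlinearity of F: the function F(K) = sup{|⟨A⟩|/|A| : A ⊆ Z_2^n, n ∈ ℕ, |A+A|/|A| ≤ K} satisfies F(K₁)/K₁ ≤ F(K₂)/K₂ for all 1 ≤ K₁ < K₂. -/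
open Finset Pointwise

/-!
Given `A` with `|A + A| ≤ K₁|A|`, put `θ = K₁ / K₂ < 1` and thin out `A × (ZMod 2)^m`, which has the
same doubling and spanning constants as `A`: keep only about `θ|A|2^m` of its points, including
the `|A| + m` points of a cross `A × {0} ∪ {a₀} × basis`. The cross forces the affine span to remain
`⟨A⟩ × (ZMod 2)^m`, while the sumset is still contained in `(A + A) × (ZMod 2)^m`. Hence the
doubling constant grows by a factor of at most `1 / θ`, to at most `K₂`, and the spanning constant
by a factor that tends to `1 / θ` as `m → ∞`, only the rounding of `θ|A|2^m` being lost.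

Since `sSup` of an unbounded set of reals is `0`, one also needs `FRconst K` to be a genuine
supremum. This is Ruzsa's covering argument: `2A - A` is covered by few translates of `A - A`,
whence the group generated by `A` lies in `⟨X⟩ + (A - A)` with `|X|` bounded in terms of `K`.
-/

open Filter Topology

section Ruzsa

variable {G : Type*} [AddCommGroup G]

lemma closure_subset_closure_add_sub {A X : Set G} (hA : A.Nonempty)
    (hcover : A + (A - A) ⊆ X + (A - A)) :
    (AddSubgroup.closure A : Set G) ⊆ (AddSubgroup.closure X : Set G) + (A - A) := by
  set P : Set G := (AddSubgroup.closure X : Set G) + (A - A)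
  have add_mem_P : ∀ p ∈ P, ∀ a ∈ A, p + a ∈ P := by
    rintro _ ⟨w, hw, d, hd, rfl⟩ a ha
    obtain ⟨x, hx, d', hd', hxd⟩ := hcover (Set.add_mem_add ha hd)
    refine ⟨w + x, add_mem hw (AddSubgroup.subset_closure hx), d', hd', ?_⟩
    calc w + x + d' = w + (x + d') := add_assoc ..
      _ = w + (a + d) := congrArg (w + ·) hxd
      _ = w + d + a := by abel
  have neg_P : -P = P := by simp only [P, neg_add, neg_sub, neg_coe_set]
  intro z hz
  induction hz using AddSubgroup.closure_induction_right with
  | zero =>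
    obtain ⟨a, ha⟩ := hA
    exact ⟨0, zero_mem _, 0, ⟨a, ha, a, ha, sub_self a⟩, add_zero 0⟩
  | add_right p _ a ha hp => exact add_mem_P p hp a ha
  | add_neg_cancel p _ a ha hp =>
    rw [← neg_P, Set.mem_neg, neg_add, neg_neg]
    exact add_mem_P (-p) (by rwa [← Set.mem_neg, neg_P]) a ha

variable [DecidableEq G] {A : Finset G} {K : ℝ}

lemma card_nsmul_sub_nsmul_le (hA : A.Nonempty) (hK : (#(A + A) : ℝ) ≤ K * #A) (m n : ℕ) :
    (#(m • A - n • A) : ℝ) ≤ K ^ (m + n) * #A := by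
  have pluennecke : (#(m • A - n • A) : ℝ) ≤ (#(A + A) / #A : ℝ) ^ (m + n) * #A := by
    have h := (NNRat.cast_le (K := ℝ)).2 (pluennecke_ruzsa_inequality_nsmul_sub_nsmul_add hA A m n)
    simpa only [NNRat.cast_mul, NNRat.cast_pow, NNRat.cast_div, NNRat.cast_natCast] using h
  have doubling_le : (#(A + A) / #A : ℝ) ≤ K := (div_le_iff₀ (by exact_mod_cast hA.card_pos)).2 hK
  exact pluennecke.trans (by gcongr)

lemma exists_closure_subset_closure_add_sub (hA : A.Nonempty) (hK : (#(A + A) : ℝ) ≤ K * #A) :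
    ∃ X : Finset G, #X ≤ K ^ 4 ∧
      (AddSubgroup.closure (A : Set G) : Set G) ⊆
        (AddSubgroup.closure (X : Set G) : Set G) + ↑(A - A) := by
  have hcard : (#(A + (A - A) + A) : ℝ) ≤ K ^ 4 * #A := by
    convert card_nsmul_sub_nsmul_le hA hK 3 1 using 3
    simp only [succ_nsmul, zero_nsmul, zero_add, sub_eq_add_neg]
    ac_rfl
  obtain ⟨X, -, hXcard, hcover⟩ := ruzsa_covering_add hA hcard
  refine ⟨X, hXcard, ?_⟩
  rw [coe_sub]
  exact closure_subset_closure_add_sub (by exact_mod_cast hA) (by exact_mod_cast hcover)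

end Ruzsa

lemma natCard_span_le_pow_card {R M : Type*} [Semiring R] [Finite R] [AddCommMonoid M] [Module R M]
    (X : Finset M) : Nat.card (Submodule.span R (X : Set M)) ≤ Nat.card R ^ #X := by
  have hrange : (Submodule.span R (X : Set M) : Set M) =
      Set.range (Fintype.linearCombination R ((↑) : X → M)) := by
    rw [← LinearMap.coe_range, Fintype.range_linearCombination, Subtype.range_coe]
  calc Nat.card (Submodule.span R (X : Set M))
      = Nat.card (Set.range (Fintype.linearCombination R ((↑) : X → M))) := by rw [← hrange]; rfl
    _ ≤ Nat.card (X → R) := Finite.card_range_le _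
    _ = Nat.card R ^ #X := by rw [Nat.card_fun, Nat.card_eq_finsetCard]

lemma coe_span_zmod_eq_closure (q : ℕ) {V : Type*} [AddCommGroup V] [Module (ZMod q) V]
    (s : Set V) : (Submodule.span (ZMod q) s : Set V) = AddSubgroup.closure s := by
  have hspan : Submodule.span (ZMod q) s =
      AddSubgroup.toZModSubmodule q (AddSubgroup.closure s) :=
    Submodule.span_eq_of_le _ AddSubgroup.subset_closure <|
      (AddSubgroup.toZModSubmodule q).to_galoisConnection.l_le <|
        (AddSubgroup.closure_le _).2 Submodule.subset_span
  rw [hspan, AddSubgroup.coe_toZModSubmodule]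

theorem natCard_affineSpan_zmod_le {q : ℕ} [NeZero q] {V : Type*} [AddCommGroup V]
    [Module (ZMod q) V] [DecidableEq V] {A : Finset V} {K : ℝ} (hA : A.Nonempty)
    (hK : (#(A + A) : ℝ) ≤ K * #A) :
    (Nat.card (affineSpan (ZMod q) (A : Set V)) : ℝ) ≤ (q : ℝ) ^ K ^ 4 * K ^ 2 * #A := by
  obtain ⟨X, hXcard, hcover⟩ := exists_closure_subset_closure_add_sub hA hK
  rw [← coe_span_zmod_eq_closure q, ← coe_span_zmod_eq_closure q] at hcover
  set W := Submodule.span (ZMod q) (X : Set V)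
  have hsubset : (affineSpan (ZMod q) (A : Set V) : Set V) ⊆ (W : Set V) + ↑(A - A) :=
    fun z hz ↦ hcover (affineSpan_le_toAffineSubspace_span hz)
  have hWfinite : (W : Set V).Finite := Module.finite_of_finite (ZMod q) (M := W)
  have hWcard : (Nat.card W : ℝ) ≤ (q : ℝ) ^ K ^ 4 := by
    calc (Nat.card W : ℝ) ≤ (q : ℝ) ^ #X := by
          exact_mod_cast (natCard_span_le_pow_card X).trans_eq (by rw [Nat.card_zmod])
      _ = (q : ℝ) ^ (#X : ℝ) := (Real.rpow_natCast _ _).symm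
      _ ≤ (q : ℝ) ^ K ^ 4 :=
          Real.rpow_le_rpow_of_exponent_le (by exact_mod_cast NeZero.one_le) hXcard
  have hdiff : (#(A - A) : ℝ) ≤ K ^ 2 * #A := by
    simpa only [one_nsmul] using card_nsmul_sub_nsmul_le hA hK 1 1
  have hcard : Nat.card (affineSpan (ZMod q) (A : Set V)) ≤ Nat.card W * #(A - A) :=
    calc Nat.card (affineSpan (ZMod q) (A : Set V))
        ≤ Nat.card ((W : Set V) + ↑(A - A) : Set V) :=
          Nat.card_mono (hWfinite.add (finite_toSet _)) hsubset
      _ ≤ Nat.card W * Nat.card (↑(A - A) : Set V) := Set.natCard_add_le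
      _ = Nat.card W * #(A - A) := by rw [Nat.card_coe_set_eq (_ : Set V), Set.ncard_coe_finset]
  calc (Nat.card (affineSpan (ZMod q) (A : Set V)) : ℝ)
      ≤ Nat.card W * #(A - A) := by exact_mod_cast hcard
    _ ≤ (q : ℝ) ^ K ^ 4 * (K ^ 2 * #A) := by gcongr
    _ = (q : ℝ) ^ K ^ 4 * K ^ 2 * #A := (mul_assoc ..).symm

/-- The spanning constant `|⟨A⟩| / |A|` of a finite set `A` in a `k`-module, where `⟨A⟩` is the
affine span over `k`; it has the junk value `0` if `A` is empty or `⟨A⟩` is infinite. -/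
noncomputable def spanningConst (k : Type*) {V : Type*} [Ring k] [AddCommGroup V] [Module k V]
    (A : Finset V) : ℝ :=
  Nat.card (affineSpan k (A : Set V)) / #A

lemma natCard_affineSpan_image {k V W : Type*} [Ring k] [AddCommGroup V] [Module k V]
    [AddCommGroup W] [Module k W] {f : V →ₗ[k] W} (hf : Function.Injective f) (s : Set V) :
    Nat.card (affineSpan k (f '' s)) = Nat.card (affineSpan k s) := by
  have hmap : (affineSpan k (f '' s) : Set W) = f '' affineSpan k s := by
    rw [← f.coe_toAffineMap, ← AffineSubspace.map_span, AffineSubspace.coe_map]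
  calc Nat.card (affineSpan k (f '' s)) = Nat.card (f '' affineSpan k s) := by rw [← hmap]; rfl
    _ = Nat.card (affineSpan k s) := Nat.card_image_of_injective hf _

lemma spanningConst_image {k V W : Type*} [Ring k] [AddCommGroup V] [Module k V]
    [AddCommGroup W] [Module k W] [DecidableEq W] {f : V →ₗ[k] W} (hf : Function.Injective f)
    (A : Finset V) : spanningConst k (A.image f) = spanningConst k A := by
  rw [spanningConst, spanningConst, coe_image, natCard_affineSpan_image hf,
    card_image_of_injective _ hf]

section FRconst

variable {K : ℝ}

lemma FRconst_nonneg : 0 ≤ FRconst K :=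
  Real.sSup_nonneg (by rintro _ ⟨n, A, -, -, rfl⟩; positivity)

lemma FRconst_le {c : ℝ} (hc : 0 ≤ c)
    (h : ∀ (n : ℕ) (A : Finset (Fin n → ZMod 2)), A.Nonempty → (#(A + A) : ℝ) ≤ K * #A →
      spanningConst (ZMod 2) A ≤ c) :
    FRconst K ≤ c :=
  Real.sSup_le (by rintro _ ⟨n, A, hA, hK, rfl⟩; exact h n A hA hK) hc

lemma spanningConst_le_FRconst_of_pi {n : ℕ} {A : Finset (Fin n → ZMod 2)} (hA : A.Nonempty)
    (hK : (#(A + A) : ℝ) ≤ K * #A) : spanningConst (ZMod 2) A ≤ FRconst K := by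
  refine le_csSup ⟨((2 : ℕ) : ℝ) ^ K ^ 4 * K ^ 2, ?_⟩ ⟨n, A, hA, hK, rfl⟩
  rintro _ ⟨n, A, hA, hK, rfl⟩
  rw [div_le_iff₀ (by exact_mod_cast hA.card_pos)]
  exact natCard_affineSpan_zmod_le hA hK

variable {V : Type*} [AddCommGroup V] [Module (ZMod 2) V] [Module.Finite (ZMod 2) V]
  [DecidableEq V] {A : Finset V}

lemma spanningConst_le_FRconst (hA : A.Nonempty) (hK : (#(A + A) : ℝ) ≤ K * #A) :
    spanningConst (ZMod 2) A ≤ FRconst K := by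
  let e := (Module.finBasis (ZMod 2) V).equivFun
  have he : Function.Injective e.toLinearMap := e.injective
  rw [← spanningConst_image he]
  refine spanningConst_le_FRconst_of_pi (hA.image _) ?_
  rwa [← image_add, card_image_of_injective _ he, card_image_of_injective _ he]

end FRconst

lemma card_add_self_le_of_subset_prod_univ {V W : Type*} [Add V] [Add W] [Fintype W] [DecidableEq V]
    [DecidableEq W] {A : Finset V} {B : Finset (V × W)} (hBA : B ⊆ A ×ˢ univ) :
    #(B + B) ≤ #(A + A) * Fintype.card W := by
  calc #(B + B) ≤ #((A ×ˢ univ) + (A ×ˢ univ) : Finset (V × W)) :=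
        card_le_card (add_subset_add hBA hBA)
    _ ≤ #((A + A) ×ˢ (univ : Finset W)) := by
        rw [product_add_product_comm]
        exact card_le_card (product_subset_product_right (subset_univ _))
    _ = #(A + A) * Fintype.card W := by rw [card_product, card_univ]

section Product

variable {k V W : Type*} [Ring k] [AddCommGroup V] [Module k V] [AddCommGroup W] [Module k W]

lemma affineSpan_eq_prod_top {s : Set V} {t : Set W} {b : Set (V × W)} {a₀ : V}
    (ha₀ : a₀ ∈ s) (ht : Submodule.span k t = ⊤) (hsb : s ×ˢ {0} ⊆ b) (htb : {a₀} ×ˢ t ⊆ b)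
    (hbs : b ⊆ s ×ˢ Set.univ) :
    affineSpan k b = (affineSpan k s).prod ⊤ := by
  apply le_antisymm
  · calc affineSpan k b ≤ affineSpan k (s ×ˢ Set.univ) := affineSpan_mono k hbs
      _ = (affineSpan k s).prod ⊤ := by rw [affineSpan_prod_eq, AffineSubspace.span_univ]
  · have span_le : affineSpan k s ≤
        (affineSpan k b).comap (LinearMap.inl k V W).toAffineMap :=
      affineSpan_le.2 fun a ha ↦ subset_affineSpan k b (hsb ⟨ha, rfl⟩)
    have top_le : ⊤ ≤ (affineSpan k b).direction.comap (LinearMap.inr k V W) := by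
      rw [← ht, Submodule.span_le]
      intro w hw
      have hw' : (a₀, w) ∈ affineSpan k b := subset_affineSpan k b (htb ⟨rfl, hw⟩)
      have ha₀' : (a₀, 0) ∈ affineSpan k b := subset_affineSpan k b (hsb ⟨ha₀, rfl⟩)
      simpa using AffineSubspace.vsub_mem_direction hw' ha₀'
    rintro ⟨a, w⟩ ⟨ha, -⟩
    simpa using AffineSubspace.vadd_mem_of_mem_direction
      (top_le (Submodule.mem_top (x := w))) (span_le ha)

lemma natCard_prod_top (s : AffineSubspace k V) :
    Nat.card (s.prod (⊤ : AffineSubspace k W)) = Nat.card s * Nat.card W := by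
  calc Nat.card (s.prod (⊤ : AffineSubspace k W))
      = Nat.card ((s : Set V) ×ˢ (Set.univ : Set W)) := rfl
    _ = Nat.card s * Nat.card W := by
      rw [Nat.card_congr (Equiv.Set.prod _ _), Nat.card_prod, Nat.card_univ]; rfl

lemma exists_card_eq_affineSpan_eq_prod_top [Fintype W] {ι : Type*} [Fintype ι]
    {v : ι → W} (hv : Submodule.span k (Set.range v) = ⊤) {A : Finset V}
    (hA : A.Nonempty) {N : ℕ} (hN : #A + Fintype.card ι ≤ N) (hN' : N ≤ #A * Fintype.card W) :
    ∃ B : Finset (V × W), #B = N ∧ B ⊆ A ×ˢ univ ∧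
      affineSpan k (B : Set (V × W)) = (affineSpan k (A : Set V)).prod ⊤ := by
  classical
  obtain ⟨a₀, ha₀⟩ := hA
  let cross : Finset (V × W) := A ×ˢ {0} ∪ {a₀} ×ˢ univ.image v
  have hcross : cross ⊆ A ×ˢ univ :=
    union_subset (product_subset_product_right (subset_univ _))
      (product_subset_product (singleton_subset_iff.2 ha₀) (subset_univ _))
  have hcrosscard : #cross ≤ N := by
    refine ((card_union_le _ _).trans ?_).trans hN
    rw [card_product, card_product, card_singleton, card_singleton, mul_one, one_mul]
    exact Nat.add_le_add_left card_image_le _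
  obtain ⟨B, hcrossB, hBA, hBcard⟩ :=
    exists_subsuperset_card_eq hcross hcrosscard (by rwa [card_product, card_univ])
  have hcrossB' : (A : Set V) ×ˢ {0} ∪ {a₀} ×ˢ Set.range v ⊆ (B : Set (V × W)) := by
    simpa only [cross, coe_union, coe_product, coe_image, coe_univ, Set.image_univ,
      coe_singleton] using coe_subset.2 hcrossB
  refine ⟨B, hBcard, hBA, affineSpan_eq_prod_top (mem_coe.2 ha₀) hv ?_ ?_ ?_⟩
  · exact Set.subset_union_left.trans hcrossB'
  · exact Set.subset_union_right.trans hcrossB'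
  · simpa only [coe_product, coe_univ] using coe_subset.2 hBA

end Product

lemma eventually_add_natCast_le_mul_pow (c : ℝ) {ε r : ℝ} (hε : 0 < ε) (hr : 1 < r) :
    ∀ᶠ m : ℕ in atTop, c + m ≤ ε * r ^ m := by
  have hlim : Tendsto (fun m : ℕ ↦ c * (m ^ 0 / r ^ m) + m ^ 1 / r ^ m) atTop (𝓝 (c * 0 + 0)) :=
    ((tendsto_pow_const_div_const_pow_of_one_lt 0 hr).const_mul c).add
      (tendsto_pow_const_div_const_pow_of_one_lt 1 hr)
  filter_upwards [hlim.eventually_lt_const (by simpa using hε)] with m hm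
  rw [← div_le_iff₀ (by positivity), add_div]
  simpa [div_eq_mul_inv] using hm.le

section Superlinearity

variable {V : Type*} [AddCommGroup V] [Module (ZMod 2) V] [Module.Finite (ZMod 2) V]
  [DecidableEq V] {A : Finset V} {K : ℝ}

lemma natCard_affineSpan_mul_two_pow_le (hA : A.Nonempty) {m N : ℕ} (hN : #A + m ≤ N)
    (hN' : N ≤ #A * 2 ^ m) (hK : (#(A + A) : ℝ) * 2 ^ m ≤ K * N) :
    (Nat.card (affineSpan (ZMod 2) (A : Set V)) : ℝ) * 2 ^ m ≤ FRconst K * N := by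
  have hcardW : Fintype.card (Fin m → ZMod 2) = 2 ^ m := by simp
  obtain ⟨B, rfl, hBA, hBspan⟩ := exists_card_eq_affineSpan_eq_prod_top
    (Pi.basisFun (ZMod 2) (Fin m)).span_eq hA (N := N) (by simpa using hN) (by rwa [hcardW])
  have hBcard : 0 < #B := by have := hA.card_pos; lia
  have hBdoubling : (#(B + B) : ℝ) ≤ K * #B := by
    refine le_trans ?_ hK
    exact_mod_cast (card_add_self_le_of_subset_prod_univ hBA).trans_eq (by rw [hcardW])
  have hB := spanningConst_le_FRconst (card_pos.1 hBcard) hBdoubling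
  rw [spanningConst, div_le_iff₀ (by exact_mod_cast hBcard), hBspan, natCard_prod_top,
    Nat.card_eq_fintype_card (α := Fin m → ZMod 2), hcardW] at hB
  exact_mod_cast hB

lemma spanningConst_le_mul_FRconst {θ : ℝ} (hθ : 0 < θ) (hθ' : θ ≤ 1) (hK : 0 ≤ K)
    (hA : A.Nonempty) (hAK : (#(A + A) : ℝ) ≤ θ * K * #A) :
    spanningConst (ZMod 2) A ≤ θ * FRconst K := by
  have hApos : (0 : ℝ) < #A := by exact_mod_cast hA.card_pos
  let N (m : ℕ) : ℕ := ⌈θ * #A * 2 ^ m⌉₊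
  have le_N (m : ℕ) : θ * #A * 2 ^ m ≤ N m := Nat.le_ceil _
  have N_le (m : ℕ) : N m ≤ #A * 2 ^ m := by
    refine Nat.ceil_le.2 ?_
    push_cast
    rw [mul_assoc]
    exact mul_le_of_le_one_left (by positivity) hθ'
  have doubling (m : ℕ) : (#(A + A) : ℝ) * 2 ^ m ≤ K * N m :=
    calc (#(A + A) : ℝ) * 2 ^ m ≤ θ * K * #A * 2 ^ m := by gcongr
      _ = K * (θ * #A * 2 ^ m) := by ring
      _ ≤ K * N m := by gcongr; exact le_N m
  have hbound : ∀ᶠ m in atTop, (Nat.card (affineSpan (ZMod 2) (A : Set V)) : ℝ) ≤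
      FRconst K * (N m / 2 ^ m) := by
    filter_upwards [eventually_add_natCast_le_mul_pow #A (mul_pos hθ hApos) one_lt_two] with m hm
    rw [← mul_div_assoc, le_div_iff₀ (by positivity)]
    exact natCard_affineSpan_mul_two_pow_le hA (by exact_mod_cast hm.trans (le_N m)) (N_le m)
      (doubling m)
  have hlim : Tendsto (fun m ↦ FRconst K * (N m / 2 ^ m)) atTop (𝓝 (FRconst K * (θ * #A))) :=
    ((tendsto_nat_ceil_mul_div_atTop (mul_pos hθ hApos).le).comp
      (tendsto_pow_atTop_atTop_of_one_lt one_lt_two)).const_mul _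
  rw [spanningConst, div_le_iff₀ hApos]
  exact (ge_of_tendsto hlim hbound).trans_eq (by ring)

lemma FRconst_mul_le {θ : ℝ} (hθ : 0 < θ) (hθ' : θ ≤ 1) (hK : 0 ≤ K) :
    FRconst (θ * K) ≤ θ * FRconst K :=
  FRconst_le (mul_nonneg hθ.le FRconst_nonneg) fun _ _ hA hAK ↦
    spanningConst_le_mul_FRconst hθ hθ' hK hA hAK

end Superlinearity

theorem stmt14 (K₁ K₂ : ℝ) (h₁ : 1 ≤ K₁) (h₁₂ : K₁ < K₂) :
    FRconst K₁ / K₁ ≤ FRconst K₂ / K₂ := by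
  have hK₁ : 0 < K₁ := by linarith
  have hK₂ : 0 < K₂ := by linarith
  rw [div_le_iff₀ hK₁]
  calc FRconst K₁ = FRconst (K₁ / K₂ * K₂) := by rw [div_mul_cancel₀ _ hK₂.ne']
    _ ≤ K₁ / K₂ * FRconst K₂ :=
        FRconst_mul_le (div_pos hK₁ hK₂) ((div_le_one hK₂).2 h₁₂.le) hK₂.le
    _ = FRconst K₂ / K₂ * K₁ := by ring
end
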